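/- Consider a K-layer feedforward network f^w with C = n_K output classes and monotone nondecreasing activation h, an input x ∈ ℝ^{n_0}, a class c', and ε ≥ 0. Then for every x' with ‖x − x'‖_∞ ≤ ε, σ_{c'}(f^w(x')) ≤ σ_{c'}(f_{UB}^{w,ε,c'}(x)); i.e., the softmax of the IBP corner vector is a certified upper bound on the softmax of class c' over the ℓ∞ ε-ball around x. -/

import Mathlib

/-- Activations of a feedforward network: `netPhi … x 0 = x` (the input `φ_(0)`) and
`netPhi … x (k+1) = h (W_k (netPhi … x k) + b_k)` (the activation `φ_(k+1)`).
For a `K`-layer network only the values with `k ≤ K - 1` are used. -/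
noncomputable def netPhi (n : ℕ → ℕ)
    (W : ∀ k : ℕ, Matrix (Fin (n (k + 1))) (Fin (n k)) ℝ)
    (b : ∀ k : ℕ, Fin (n (k + 1)) → ℝ) (h : ℝ → ℝ)
    (x : Fin (n 0) → ℝ) : (k : ℕ) → Fin (n k) → ℝ
  | 0 => x
  | (k + 1) => fun i => h (((W k).mulVec (netPhi n W b h x k) + b k) i)

/-- Pre-activations: `netPre … x k = W_k φ_(k) + b_k`, i.e. the pre-activation
`f_(k+1)` of the network.  The output of a `K`-layer network is `f^w(x) = netPre … x (K-1)`. -/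
noncomputable def netPre (n : ℕ → ℕ)
    (W : ∀ k : ℕ, Matrix (Fin (n (k + 1))) (Fin (n k)) ℝ)
    (b : ∀ k : ℕ, Fin (n (k + 1)) → ℝ) (h : ℝ → ℝ)
    (x : Fin (n 0) → ℝ) (k : ℕ) : Fin (n (k + 1)) → ℝ :=
  (W k).mulVec (netPhi n W b h x k) + b k

/-- Interval bound propagation on the activations: `ibpPhi … x ε k = (φ_(k)^L, φ_(k)^U)`.
At `k = 0` the bounds are `x ∓ ε·𝟙`; at `k+1` they are `h (μ_{k+1} ∓ r_{k+1})` with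
`μ_{k+1} = W_k (φ_(k)^U + φ_(k)^L)/2 + b_k` and `r_{k+1} = |W_k| (φ_(k)^U − φ_(k)^L)/2`. -/
noncomputable def ibpPhi (n : ℕ → ℕ)
    (W : ∀ k : ℕ, Matrix (Fin (n (k + 1))) (Fin (n k)) ℝ)
    (b : ∀ k : ℕ, Fin (n (k + 1)) → ℝ) (h : ℝ → ℝ)
    (x : Fin (n 0) → ℝ) (ε : ℝ) : (k : ℕ) → (Fin (n k) → ℝ) × (Fin (n k) → ℝ)
  | 0 => (fun i => x i - ε, fun i => x i + ε)
  | (k + 1) =>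
      let L := (ibpPhi n W b h x ε k).1
      let U := (ibpPhi n W b h x ε k).2
      let μ := (W k).mulVec (fun i => (U i + L i) / 2) + b k
      let r := (Matrix.of fun i j => |W k i j|).mulVec (fun i => (U i - L i) / 2)
      (fun i => h (μ i - r i), fun i => h (μ i + r i))

/-- Interval bound propagation on the pre-activations:
`ibpPre … x ε k = (f_(k+1)^L, f_(k+1)^U) = (μ_{k+1} − r_{k+1}, μ_{k+1} + r_{k+1})`.
The IBP output bounds of a `K`-layer network are `(f^{w,L,ε}, f^{w,U,ε}) = ibpPre … x ε (K-1)`. -/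
noncomputable def ibpPre (n : ℕ → ℕ)
    (W : ∀ k : ℕ, Matrix (Fin (n (k + 1))) (Fin (n k)) ℝ)
    (b : ∀ k : ℕ, Fin (n (k + 1)) → ℝ) (h : ℝ → ℝ)
    (x : Fin (n 0) → ℝ) (ε : ℝ) (k : ℕ) : (Fin (n (k + 1)) → ℝ) × (Fin (n (k + 1)) → ℝ) :=
  let L := (ibpPhi n W b h x ε k).1
  let U := (ibpPhi n W b h x ε k).2
  let μ := (W k).mulVec (fun i => (U i + L i) / 2) + b k
  let r := (Matrix.of fun i j => |W k i j|).mulVec (fun i => (U i - L i) / 2)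
  (fun i => μ i - r i, fun i => μ i + r i)

/-- Softmax probability of class `y` for logits `z ∈ ℝ^C`. -/
noncomputable def softmax {C : ℕ} (y : Fin C) (z : Fin C → ℝ) : ℝ :=
  Real.exp (z y) / ∑ j, Real.exp (z j)

/-- The corner vector `f_UB` with `(f_UB) c' = U c'` and `(f_UB) j = L j` for `j ≠ c'`. -/
def cornerUB {C : ℕ} (c' : Fin C) (L U : Fin C → ℝ) : Fin C → ℝ :=
  fun j => if j = c' then U j else L j

/-!
If `|v - m| ≤ r` coordinatewise, then `|A v - A m| ≤ |A| r` by the triangle inequality. Applied to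
the centre and radius of a box, this carries the IBP bounds through an affine layer, and a monotone
activation preserves them, so by induction over the layers they enclose the true logits. The
softmax of class `c'` is the inverse of `∑ j, exp (z j - z c')`, so over a box of logits it is
largest where `z c'` is maximal and every other logit is minimal, which is the corner vector.
-/

section IntervalArithmetic

open Matrix

variable {ι κ R : Type*} [Fintype κ]

lemma abs_mulVec_le [Ring R] [LinearOrder R] [IsOrderedRing R] (A : Matrix ι κ R)
    {v r : κ → R} (hv : |v| ≤ r) : |A *ᵥ v| ≤ A.map abs *ᵥ r := fun i ↦
  calc |∑ j, A i j * v j|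
    _ ≤ ∑ j, |A i j * v j| := Finset.abs_sum_le_sum_abs _ _
    _ = ∑ j, |A i j| * |v j| := by simp only [abs_mul]
    _ ≤ ∑ j, |A i j| * r j := by gcongr with j; exact hv j

lemma mulVec_add_mem_Icc [Field R] [LinearOrder R] [IsStrictOrderedRing R] (A : Matrix ι κ R)
    (c : ι → R) {L U v : κ → R} (hv : v ∈ Set.Icc L U) :
    A *ᵥ v + c ∈ Set.Icc
      (A *ᵥ (fun j ↦ (U j + L j) / 2) + c - A.map abs *ᵥ fun j ↦ (U j - L j) / 2)
      (A *ᵥ (fun j ↦ (U j + L j) / 2) + c + A.map abs *ᵥ fun j ↦ (U j - L j) / 2) := by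
  set m : κ → R := fun j ↦ (U j + L j) / 2
  set r : κ → R := fun j ↦ (U j - L j) / 2
  have hvm : |v - m| ≤ r := fun j ↦
    abs_le.mpr ⟨by simp only [Pi.sub_apply, m, r]; linarith [hv.1 j],
      by simp only [Pi.sub_apply, m, r]; linarith [hv.2 j]⟩
  have hA : |A *ᵥ v - A *ᵥ m| ≤ A.map abs *ᵥ r := by
    rw [← mulVec_sub]
    exact abs_mulVec_le A hvm
  obtain ⟨hU, hL⟩ := abs_le'.mp hA
  refine ⟨fun i ↦ ?_, fun i ↦ ?_⟩
  · have hLi := hL i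
    simp only [Pi.add_apply, Pi.sub_apply, Pi.neg_apply] at hLi ⊢
    linarith
  · have hUi := hU i
    simp only [Pi.add_apply, Pi.sub_apply] at hUi ⊢
    linarith

end IntervalArithmetic

section IntervalBoundPropagation

variable (n : ℕ → ℕ) (W : ∀ k : ℕ, Matrix (Fin (n (k + 1))) (Fin (n k)) ℝ)
  (b : ∀ k : ℕ, Fin (n (k + 1)) → ℝ) {h : ℝ → ℝ} {x x' : Fin (n 0) → ℝ} {ε : ℝ}

lemma netPre_mem_Icc_of_netPhi_mem_Icc {k : ℕ}
    (hφ : netPhi n W b h x' k ∈ Set.Icc (ibpPhi n W b h x ε k).1 (ibpPhi n W b h x ε k).2) :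
    netPre n W b h x' k ∈ Set.Icc (ibpPre n W b h x ε k).1 (ibpPre n W b h x ε k).2 :=
  mulVec_add_mem_Icc (W k) (b k) hφ

lemma netPhi_mem_Icc_ibpPhi (hmono : Monotone h) (hx : ‖x - x'‖ ≤ ε) (k : ℕ) :
    netPhi n W b h x' k ∈ Set.Icc (ibpPhi n W b h x ε k).1 (ibpPhi n W b h x ε k).2 := by
  induction k with
  | zero =>
    have hmem (i : Fin (n 0)) : x' i ∈ Set.Icc (x i - ε) (x i + ε) :=
      Set.mem_Icc_iff_abs_le.mp ((norm_le_pi_norm (x - x') i).trans hx)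
    exact ⟨fun i ↦ (hmem i).1, fun i ↦ (hmem i).2⟩
  | succ k ih =>
    have hpre := netPre_mem_Icc_of_netPhi_mem_Icc n W b ih
    exact ⟨fun i ↦ hmono (hpre.1 i), fun i ↦ hmono (hpre.2 i)⟩

lemma netPre_mem_Icc_ibpPre (hmono : Monotone h) (hx : ‖x - x'‖ ≤ ε) (k : ℕ) :
    netPre n W b h x' k ∈ Set.Icc (ibpPre n W b h x ε k).1 (ibpPre n W b h x ε k).2 :=
  netPre_mem_Icc_of_netPhi_mem_Icc n W b (netPhi_mem_Icc_ibpPhi n W b hmono hx k)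

end IntervalBoundPropagation

section Softmax

variable {C : ℕ} {y : Fin C}

lemma softmax_eq_inv_sum_exp_sub (y : Fin C) (z : Fin C → ℝ) :
    softmax y z = (∑ j, Real.exp (z j - z y))⁻¹ := by
  simp only [softmax, Real.exp_sub, ← Finset.sum_div, inv_div]

lemma softmax_le_softmax_of_sub_le_sub {z w : Fin C → ℝ} (hzw : ∀ j, w j - w y ≤ z j - z y) :
    softmax y z ≤ softmax y w := by
  have hpos : 0 < ∑ j, Real.exp (w j - w y) :=
    Finset.sum_pos (fun j _ ↦ Real.exp_pos _) ⟨y, Finset.mem_univ y⟩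
  rw [softmax_eq_inv_sum_exp_sub, softmax_eq_inv_sum_exp_sub]
  exact inv_anti₀ hpos (Finset.sum_le_sum fun j _ ↦ Real.exp_le_exp.mpr (hzw j))

lemma softmax_le_softmax_cornerUB {L U z : Fin C → ℝ} (hL : ∀ j ≠ y, L j ≤ z j)
    (hU : z y ≤ U y) : softmax y z ≤ softmax y (cornerUB y L U) := by
  refine softmax_le_softmax_of_sub_le_sub fun j ↦ ?_
  rcases eq_or_ne j y with rfl | hj
  · simp only [sub_self, le_refl]
  · simp only [cornerUB, if_neg hj, if_true]
    exact sub_le_sub (hL j hj) hU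

end Softmax

/-- the softmax of the IBP corner vector is a certified upper bound on the
softmax of class `c'` over the `ℓ∞` ε-ball around `x`: for every `x'` with
`‖x − x'‖_∞ ≤ ε`, `σ_{c'}(f^w(x')) ≤ σ_{c'}(f_UB^{w,ε,c'}(x))`, for a `K`-layer
network (`K ≥ 1`) with monotone nondecreasing activation and `C = n K` output classes. -/
theorem ibp_cornerUB_ge_softmax (n : ℕ → ℕ)
    (W : ∀ k : ℕ, Matrix (Fin (n (k + 1))) (Fin (n k)) ℝ)
    (b : ∀ k : ℕ, Fin (n (k + 1)) → ℝ) (h : ℝ → ℝ) (hmono : Monotone h)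
    (K : ℕ) (hK : 1 ≤ K) (x : Fin (n 0) → ℝ) (c' : Fin (n (K - 1 + 1)))
    (ε : ℝ) (hε : 0 ≤ ε) :
    ∀ x' : Fin (n 0) → ℝ, ‖x - x'‖ ≤ ε →
      softmax c' (netPre n W b h x' (K - 1)) ≤
        softmax c' (cornerUB c' (ibpPre n W b h x ε (K - 1)).1
          (ibpPre n W b h x ε (K - 1)).2) := by
  intro x' hx'
  obtain ⟨hL, hU⟩ := netPre_mem_Icc_ibpPre n W b hmono hx' (K - 1)
  exact softmax_le_softmax_cornerUB (fun j _ ↦ hL j) (hU c')
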